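/- Let A ∈ ℍ^{m×r}, X ∈ ℍ^{m×n}, B' ∈ ℍ^{r×n} be quaternion matrices and λ > 0 a real number. Define h(B) = ½‖A·B − X‖_F² + (λ/2)‖B − B'‖_F² for B ∈ ℍ^{r×n}. Then the matrix B₀ = (Aᴴ·A + λ·I)⁻¹·(Aᴴ·X + λ·B') is a global minimizer of h: for every B ∈ ℍ^{r×n}, h(B₀) ≤ h(B). -/

import Mathlib

open scoped Quaternion Matrix

/-- The Frobenius norm of a quaternion matrix. -/
noncomputable def frob {m n : ℕ} (A : Matrix (Fin m) (Fin n) ℍ[ℝ]) : ℝ :=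
  Real.sqrt (∑ i, ∑ j, ‖A i j‖ ^ 2)

/-!
For the Frobenius inner product the adjoint of `B ↦ A * B` is `Y ↦ Aᴴ * Y`, so minimizing the
objective is Tikhonov-regularized least squares in a real inner product space. The objective is
quadratic with positive semidefinite second-order part, hence minimal wherever its first variation
vanishes, and this happens exactly at the solution of `(Aᴴ * A + c • 1) * B = Aᴴ * X + c • B'`.
Pairing `(Aᴴ * A + c • 1) * Z` with `Z` gives `‖A * Z‖ ^ 2 + c * ‖Z‖ ^ 2`, so the matrix on the
left is left regular, and therefore invertible because the matrix algebra is finite-dimensional.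
-/

open scoped RealInnerProductSpace

theorem quaternion_inner_mul_left (a b c : ℍ[ℝ]) : ⟪a * b, c⟫ = ⟪b, star a * c⟫ := by
  simp only [Quaternion.inner_def, Quaternion.re_mul, Quaternion.imI_mul, Quaternion.imJ_mul,
    Quaternion.imK_mul, Quaternion.re_star, Quaternion.imI_star, Quaternion.imJ_star,
    Quaternion.imK_star]
  ring

section Tikhonov

variable {E F : Type*} [SeminormedAddCommGroup E] [InnerProductSpace ℝ E]
  [SeminormedAddCommGroup F] [InnerProductSpace ℝ F]

/-- The objective of Tikhonov-regularized least squares for the equation `T x = y`, with prior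
guess `z` and regularization parameter `c`. -/
noncomputable def tikhonov (T : E →ₗ[ℝ] F) (y : F) (z : E) (c : ℝ) (x : E) : ℝ :=
  (1 / 2) * ‖T x - y‖ ^ 2 + (c / 2) * ‖x - z‖ ^ 2

theorem tikhonov_nonneg (T : E →ₗ[ℝ] F) (y : F) (z : E) {c : ℝ} (hc : 0 ≤ c) (x : E) :
    0 ≤ tikhonov T y z c x := by
  unfold tikhonov
  positivity

theorem tikhonov_add (T : E →ₗ[ℝ] F) (y : F) (z : E) (c : ℝ) (x v : E) :
    tikhonov T y z c (x + v) =
      tikhonov T y z c x + (⟪T v, T x - y⟫ + c * ⟪v, x - z⟫) + tikhonov T 0 0 c v := by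
  have hF : ‖T (x + v) - y‖ ^ 2 = ‖T v‖ ^ 2 + 2 * ⟪T v, T x - y⟫ + ‖T x - y‖ ^ 2 := by
    rw [← norm_add_sq_real, map_add, ← add_sub_assoc, add_comm (T v)]
  have hE : ‖x + v - z‖ ^ 2 = ‖v‖ ^ 2 + 2 * ⟪v, x - z⟫ + ‖x - z‖ ^ 2 := by
    rw [← norm_add_sq_real, ← add_sub_assoc, add_comm v]
  simp only [tikhonov, hF, hE, sub_zero]
  ring

theorem tikhonov_le_of_forall_inner_eq_zero {T : E →ₗ[ℝ] F} {y : F} {z : E} {c : ℝ} (hc : 0 ≤ c)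
    {x₀ : E} (h : ∀ v, ⟪T v, T x₀ - y⟫ + c * ⟪v, x₀ - z⟫ = 0) (x : E) :
    tikhonov T y z c x₀ ≤ tikhonov T y z c x := by
  rw [← add_sub_cancel x₀ x, tikhonov_add, h, add_zero]
  exact le_add_of_nonneg_right (tikhonov_nonneg T 0 0 hc _)

end Tikhonov

section Frobenius

attribute [local instance] Matrix.frobeniusNormedAddCommGroup Matrix.frobeniusNormedSpace

variable {l m n : Type*} [Fintype l] [Fintype m] [Fintype n]

theorem frobenius_norm_sq {α : Type*} [NormedAddCommGroup α] (A : Matrix m n α) :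
    ‖A‖ ^ 2 = ∑ i, ∑ j, ‖A i j‖ ^ 2 := by
  rw [Matrix.frobenius_norm_def, ← Real.sqrt_eq_rpow, Real.sq_sqrt (by positivity)]
  simp only [Real.rpow_two]

/-- The Frobenius inner product `∑ i, ∑ j, ⟪U i j, V i j⟫`, which induces the Frobenius norm. Like
the norms on matrices in Mathlib it is not a global instance. -/
noncomputable abbrev frobeniusInnerProductSpace {α : Type*} [NormedAddCommGroup α]
    [InnerProductSpace ℝ α] : InnerProductSpace ℝ (Matrix m n α) where
  inner U V := ∑ i, ∑ j, ⟪U i j, V i j⟫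
  norm_sq_eq_re_inner U := by simp [frobenius_norm_sq]
  conj_inner_symm U V := by simp [real_inner_comm]
  add_left U V W := by simp [inner_add_left, Finset.sum_add_distrib]
  smul_left U V c := by simp [real_inner_smul_left, Finset.mul_sum]

attribute [local instance] frobeniusInnerProductSpace

theorem frobenius_inner_def {α : Type*} [NormedAddCommGroup α] [InnerProductSpace ℝ α]
    (U V : Matrix m n α) : ⟪U, V⟫ = ∑ i, ∑ j, ⟪U i j, V i j⟫ :=
  rfl

variable {α : Type*} [NormedRing α] [Star α] [InnerProductSpace ℝ α]

-- `hα` is the left half of Ambrose's H*-algebra axiom; `ℝ`, `ℂ` and `ℍ` satisfy it.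
theorem frobenius_inner_mul_left (hα : ∀ x y z : α, ⟪x * y, z⟫ = ⟪y, star x * z⟫)
    (A : Matrix m l α) (U : Matrix l n α) (V : Matrix m n α) :
    ⟪A * U, V⟫ = ⟪U, Aᴴ * V⟫ := by
  simp only [frobenius_inner_def, Matrix.mul_apply, Matrix.conjTranspose_apply, sum_inner,
    inner_sum, hα]
  rw [Finset.sum_comm_cycle]
  exact Finset.sum_congr rfl fun _ _ => Finset.sum_comm

variable [IsScalarTower ℝ α α] [DecidableEq l]

theorem frobenius_inner_gram_add_smul_one_mul (hα : ∀ x y z : α, ⟪x * y, z⟫ = ⟪y, star x * z⟫)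
    (A : Matrix m l α) (c : ℝ) (U V : Matrix l n α) :
    ⟪U, (Aᴴ * A + c • (1 : Matrix l l α)) * V⟫ = ⟪A * U, A * V⟫ + c * ⟪U, V⟫ := by
  rw [Matrix.add_mul, Matrix.smul_mul, Matrix.one_mul, Matrix.mul_assoc, inner_add_right,
    real_inner_smul_right, frobenius_inner_mul_left hα]

variable [SMulCommClass ℝ α α] [FiniteDimensional ℝ α]

theorem isUnit_gram_add_smul_one (hα : ∀ x y z : α, ⟪x * y, z⟫ = ⟪y, star x * z⟫)
    (A : Matrix m l α) {c : ℝ} (hc : 0 < c) :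
    IsUnit (Aᴴ * A + c • (1 : Matrix l l α)) := by
  have : IsArtinianRing (Matrix l l α)ᵐᵒᵖ := IsArtinianRing.of_finite ℝ _
  rw [IsArtinianRing.isUnit_iff_isLeftRegular, isLeftRegular_iff_right_eq_zero_of_mul]
  intro Z hZ
  have hsum : ‖A * Z‖ ^ 2 + c * ‖Z‖ ^ 2 = 0 := by
    rw [← real_inner_self_eq_norm_sq, ← real_inner_self_eq_norm_sq,
      ← frobenius_inner_gram_add_smul_one_mul hα, hZ, inner_zero_right]
  have hnorm : c * ‖Z‖ ^ 2 = 0 :=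
    ((add_eq_zero_iff_of_nonneg (by positivity) (by positivity)).1 hsum).2
  simpa [hc.ne'] using hnorm

theorem global_min_B_general (hα : ∀ x y z : α, ⟪x * y, z⟫ = ⟪y, star x * z⟫)
    (A : Matrix m l α) (X : Matrix m n α) (B' : Matrix l n α) {c : ℝ} (hc : 0 < c)
    (B : Matrix l n α) :
    tikhonov (mulLeftLinearMap n ℝ A) X B' c
        (Ring.inverse (Aᴴ * A + c • (1 : Matrix l l α)) * (Aᴴ * X + c • B')) ≤
      tikhonov (mulLeftLinearMap n ℝ A) X B' c B := by
  set M := Aᴴ * A + c • (1 : Matrix l l α)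
  set B₀ := Ring.inverse M * (Aᴴ * X + c • B') with hB₀
  have hnormal : M * B₀ = Aᴴ * X + c • B' := by
    rw [hB₀, ← Matrix.mul_assoc, Ring.mul_inverse_cancel _ (isUnit_gram_add_smul_one hα A hc),
      Matrix.one_mul]
  refine tikhonov_le_of_forall_inner_eq_zero hc.le (fun V => ?_) B
  calc ⟪A * V, A * B₀ - X⟫ + c * ⟪V, B₀ - B'⟫
      = (⟪A * V, A * B₀⟫ + c * ⟪V, B₀⟫) - (⟪A * V, X⟫ + c * ⟪V, B'⟫) := by
        rw [inner_sub_right, inner_sub_right]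
        ring
    _ = ⟪V, M * B₀⟫ - ⟪V, Aᴴ * X + c • B'⟫ := by
        rw [frobenius_inner_gram_add_smul_one_mul hα, frobenius_inner_mul_left hα A V X,
          inner_add_right, real_inner_smul_right]
    _ = 0 := by rw [hnormal, sub_self]

theorem frob_eq_norm {m n : ℕ} (A : Matrix (Fin m) (Fin n) ℍ[ℝ]) : frob A = ‖A‖ := by
  rw [frob, ← frobenius_norm_sq, Real.sqrt_sq (norm_nonneg A)]

end Frobenius

/-- The matrix B₀ = (Aᴴ·A + λ·I)⁻¹·(Aᴴ·X + λ·B') is a global minimizer of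
h(B) = ½‖A·B − X‖_F² + (λ/2)‖B − B'‖_F². -/
theorem global_min_B {m r n : ℕ}
    (A : Matrix (Fin m) (Fin r) ℍ[ℝ]) (X : Matrix (Fin m) (Fin n) ℍ[ℝ])
    (B' : Matrix (Fin r) (Fin n) ℍ[ℝ]) (lam : ℝ) (hlam : 0 < lam) :
    ∀ B : Matrix (Fin r) (Fin n) ℍ[ℝ],
      (1 / 2) * frob (A * (Ring.inverse (Aᴴ * A + lam • (1 : Matrix (Fin r) (Fin r) ℍ[ℝ])) *
            (Aᴴ * X + lam • B')) - X) ^ 2 +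
        (lam / 2) * frob (Ring.inverse (Aᴴ * A + lam • (1 : Matrix (Fin r) (Fin r) ℍ[ℝ])) *
            (Aᴴ * X + lam • B') - B') ^ 2 ≤
      (1 / 2) * frob (A * B - X) ^ 2 + (lam / 2) * frob (B - B') ^ 2 := by
  intro B
  simpa only [tikhonov, mulLeftLinearMap_apply, frob_eq_norm] using
    global_min_B_general quaternion_inner_mul_left A X B' hlam B
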